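/- arXiv:1308.3983 — 4 statements merged into one kernel-verified Lean document; each statement's English description precedes it below -/
import Mathlib

section
/- Let A be a small category, let C = Psh(A) be the category of presheaves of sets on A, and let (X_i)_{i ∈ I} be a set-indexed family of presheaves. Let W_I be the class of morphisms f : X → Y of C such that for every i ∈ I, postcomposition with f gives a bijection Hom_C(X_i, X) → Hom_C(X_i, Y). Then there exists a model structure on C whose class of weak equivalences is W_I, in which every morphism of C is a fibration, and in which the trivial cofibrations (cofibrations that are weak equivalences) are exactly the isomorphisms of C. -/
open CategoryTheory Limits

universe v u

namespace Paper

variable {C : Type u} [Category.{v} C]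

/-- The class of morphisms having the right lifting property with respect to
every morphism of `L`. -/
def rlpOf (L : MorphismProperty C) : MorphismProperty C :=
  fun _ _ g => ∀ ⦃A B : C⦄ (h : A ⟶ B), L h → HasLiftingProperty h g

/-- The class of morphisms having the left lifting property with respect to
every morphism of `R`. -/
def llpOf (R : MorphismProperty C) : MorphismProperty C :=
  fun _ _ h => ∀ ⦃A B : C⦄ (g : A ⟶ B), R g → HasLiftingProperty h g

/-- `(L, R)` is a weak factorization system. -/
structure IsWFS (L R : MorphismProperty C) : Prop where
  factor : ∀ ⦃X Y : C⦄ (f : X ⟶ Y), ∃ (Z : C) (g : X ⟶ Z) (h : Z ⟶ Y), L g ∧ R h ∧ g ≫ h = f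
  rlp_eq : R = rlpOf L
  llp_eq : L = llpOf R

/-- The two-out-of-three property for a class of morphisms. -/
def TwoOutOfThree (W : MorphismProperty C) : Prop :=
  ∀ ⦃X Y Z : C⦄ (f : X ⟶ Y) (g : Y ⟶ Z),
    (W f → W g → W (f ≫ g)) ∧ (W f → W (f ≫ g) → W g) ∧ (W (f ≫ g) → W g → W f)

/-- Intersection of two classes of morphisms. -/
def inter (P Q : MorphismProperty C) : MorphismProperty C := fun _ _ f => P f ∧ Q f

/-- The class of all morphisms. -/
def allMaps : MorphismProperty C := fun _ _ _ => True

/-- A model structure (in Quillen's sense). -/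
structure IsModelStructure (Cof Fib W : MorphismProperty C) : Prop where
  twoOutOfThree : TwoOutOfThree W
  wfs_trivCof_fib : IsWFS (inter Cof W) Fib
  wfs_cof_trivFib : IsWFS Cof (inter Fib W)

/-- The class of weak equivalences of the counting model defined by a family of
objects `(X_i)_{i ∈ I}` of `C`. -/
def countW {I : Type w} (Xi : I → C) : MorphismProperty C :=
  fun X _ f => ∀ i : I, Function.Bijective (fun h : Xi i ⟶ X => h ≫ f)

/-- Sources of the generating cofibrations. -/
noncomputable def genSrc {D : Type*} [Category* D] [HasInitial D] [HasBinaryCoproducts D]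
    {I : Type*} (Xi : I → D) : I ⊕ I → D
  | .inl _ => ⊥_ D
  | .inr i => Xi i ⨿ Xi i

/-- Targets of the generating cofibrations. -/
def genTgt {D : Type*} {I : Type*} (Xi : I → D) : I ⊕ I → D
  | .inl i => Xi i
  | .inr i => Xi i

/-- The generating cofibrations: `∅ ⟶ X_i` and the codiagonals of the `X_i`. -/
noncomputable def genMap {D : Type*} [Category* D] [HasInitial D] [HasBinaryCoproducts D]
    {I : Type*} (Xi : I → D) : ∀ k : I ⊕ I, genSrc Xi k ⟶ genTgt Xi k
  | .inl i => initial.to (Xi i)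
  | .inr i => coprod.desc (𝟙 (Xi i)) (𝟙 (Xi i))

lemma lifting_initial_iff {D : Type*} [Category* D] [HasInitial D] {T X Y : D} (f : X ⟶ Y) :
    HasLiftingProperty (initial.to T) f ↔ Function.Surjective (fun h : T ⟶ X => h ≫ f) := by
  constructor
  · intro _ b
    have sq : CommSq (initial.to X) (initial.to T) f b := ⟨initialIsInitial.hom_ext _ _⟩
    exact ⟨sq.lift, sq.fac_right⟩
  · intro h
    refine ⟨fun {a b} sq => ?_⟩
    obtain ⟨l, hl⟩ := h b
    exact ⟨⟨l, initialIsInitial.hom_ext _ _, hl⟩⟩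

lemma lifting_codiag_iff {D : Type*} [Category* D] [HasBinaryCoproducts D] {T X Y : D}
    (f : X ⟶ Y) :
    HasLiftingProperty (coprod.desc (𝟙 T) (𝟙 T)) f ↔
      Function.Injective (fun h : T ⟶ X => h ≫ f) := by
  constructor
  · intro _ a b hab
    have sq : CommSq (coprod.desc a b) (coprod.desc (𝟙 T) (𝟙 T)) f (a ≫ f) := ⟨by
      apply coprod.hom_ext
      · simp [coprod.inl_desc, coprod.inr_desc, coprod.inl_desc_assoc, coprod.inr_desc_assoc]
      · simpa [coprod.inl_desc, coprod.inr_desc, coprod.inl_desc_assoc, coprod.inr_desc_assoc] using hab.symm⟩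
    have e1 := congrArg (fun t => coprod.inl ≫ t) sq.fac_left
    have e2 := congrArg (fun t => coprod.inr ≫ t) sq.fac_left
    simp only [coprod.inl_desc, coprod.inr_desc, coprod.inl_desc_assoc,
      coprod.inr_desc_assoc, Category.id_comp] at e1 e2
    exact e1.symm.trans e2
  · intro h
    refine ⟨fun {a b} sq => ?_⟩
    have w1 : (coprod.inl ≫ a) ≫ f = b := by
      have := congrArg (fun t => coprod.inl ≫ t) sq.w
      simpa [coprod.inl_desc, coprod.inr_desc, coprod.inl_desc_assoc, coprod.inr_desc_assoc] using this
    have w2 : (coprod.inr ≫ a) ≫ f = b := by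
      have := congrArg (fun t => coprod.inr ≫ t) sq.w
      simpa [coprod.inl_desc, coprod.inr_desc, coprod.inl_desc_assoc, coprod.inr_desc_assoc] using this
    have e : coprod.inl ≫ a = coprod.inr ≫ a := h (w1.trans w2.symm)
    refine ⟨⟨coprod.inl ≫ a, ?_, w1⟩⟩
    apply coprod.hom_ext
    · simp [coprod.inl_desc, coprod.inr_desc, coprod.inl_desc_assoc, coprod.inr_desc_assoc]
    · simp [e, coprod.inl_desc, coprod.inr_desc, coprod.inl_desc_assoc, coprod.inr_desc_assoc]

lemma countW_iff_genMap {D : Type*} [Category* D] [HasInitial D] [HasBinaryCoproducts D]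
    {I : Type*} (Xi : I → D) {X Y : D} (f : X ⟶ Y) :
    countW Xi f ↔ ∀ k, HasLiftingProperty (genMap Xi k) f := by
  constructor
  · rintro h (i | i)
    · exact (lifting_initial_iff f).2 (h i).2
    · exact (lifting_codiag_iff f).2 (h i).1
  · intro h i
    exact ⟨(lifting_codiag_iff f).1 (h (.inr i)), (lifting_initial_iff f).1 (h (.inl i))⟩

lemma exists_cardinal_family {D : Type*} [Category* D] [IsLocallyPresentable.{w} D]
    {K : Type w} (S : K → D) :
    ∃ (κ : Cardinal.{w}) (_ : Fact κ.IsRegular), ∀ k, IsCardinalPresentable (S k) κ := by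
  have h (k : K) : ∃ (κ : Cardinal.{w}) (_ : Fact κ.IsRegular),
      IsCardinalPresentable (S k) κ :=
    Functor.IsAccessible.exists_cardinal (F := coyoneda.obj (Opposite.op (S k)))
  choose κ hκ hS using h
  obtain ⟨κ', h₁, h₂⟩ := HasCardinalLT.exists_regular_cardinal_forall.{w}
    (fun k => (κ k).ord.ToType)
  have : Fact κ'.IsRegular := ⟨h₁⟩
  refine ⟨κ', this, fun k => ?_⟩
  have := hS k
  refine isCardinalPresentable_of_le (S k) (κ := κ k) (le_of_lt ?_)
  simpa [hasCardinalLT_iff_cardinal_mk_lt] using h₂ k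

lemma hasSmallObjectArgument_ofHoms {D : Type*} [Category.{w} D] [IsLocallyPresentable.{w} D]
    [HasColimitsOfSize.{w, w} D] [HasPushouts D]
    {K : Type w} {S T : K → D} (f : ∀ k, S k ⟶ T k) :
    (MorphismProperty.ofHoms f).HasSmallObjectArgument.{w} := by
  obtain ⟨κ, hκ, hS⟩ := exists_cardinal_family S
  have : Nonempty κ.ord.ToType := by simpa using hκ.out.ne_zero
  have := WellFoundedLT.toOrderBot κ.ord.ToType
  have : MorphismProperty.IsSmall.{w} (MorphismProperty.ofHoms f) :=
    MorphismProperty.isSmall_ofHoms ..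
  refine ⟨κ, inferInstance, inferInstance, { preservesColimit := ?_ }⟩
  intro A B X Y i hi g hg
  obtain ⟨k⟩ := hi
  have := hS k
  have := preservesColimitsOfShape_of_isCardinalPresentable (S k) κ κ.ord.ToType
  infer_instance

lemma twoOutOfThree_countW {D : Type*} [Category* D] {I : Type*} (Xi : I → D) :
    TwoOutOfThree (countW Xi) := by
  intro X Y Z f g
  have key (i : I) : (fun h : Xi i ⟶ X => h ≫ f ≫ g) =
      (fun h : Xi i ⟶ Y => h ≫ g) ∘ (fun h : Xi i ⟶ X => h ≫ f) := by
    funext h; simp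
  refine ⟨fun hf hg i => ?_, fun hf hfg i => ?_, fun hfg hg i => ?_⟩
  · rw [key]; exact (hg i).comp (hf i)
  · have := hfg i
    rw [key] at this
    exact (Function.Bijective.of_comp_iff _ (hf i)).1 this
  · have := hfg i
    rw [key] at this
    exact (Function.Bijective.of_comp_iff' (hg i) _).1 this

/-- on a presheaf category `Psh(A)`, for any set-indexed family of
presheaves `(X_i)_{i ∈ I}`, there is a model structure whose weak equivalences are
the morphisms inducing bijections on `Hom(X_i, -)` for all `i`, in which every
morphism is a fibration and the trivial cofibrations are exactly the isomorphisms. -/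
theorem stmt_3 {A : Type u} [SmallCategory A] {I : Type u}
    (Xi : I → (Aᵒᵖ ⥤ Type u)) :
    ∃ Cof Fib : MorphismProperty (Aᵒᵖ ⥤ Type u),
      IsModelStructure Cof Fib (countW Xi) ∧
        Fib = allMaps ∧
        inter Cof (countW Xi) = MorphismProperty.isomorphisms (Aᵒᵖ ⥤ Type u) := by
  let W := countW Xi
  let G := MorphismProperty.ofHoms (genMap Xi)
  have : G.HasSmallObjectArgument.{u} := hasSmallObjectArgument_ofHoms _
  have hW : W = G.rlp := by
    ext X Y f
    refine (countW_iff_genMap Xi f).trans ⟨fun h => ?_, fun h k => h _ ⟨k⟩⟩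
    rintro _ _ _ ⟨k⟩
    exact h k
  have hinter : inter allMaps W = W := by
    ext X Y f
    exact ⟨fun h => h.2, fun h => ⟨trivial, h⟩⟩
  have hiso : inter (llpOf W) W = MorphismProperty.isomorphisms (Aᵒᵖ ⥤ Type u) := by
    ext X Y f
    constructor
    · rintro ⟨h1, h2⟩
      have := h1 f h2
      have sq : CommSq (𝟙 X) f f (𝟙 Y) := ⟨by simp⟩
      exact ⟨sq.lift, sq.fac_left, sq.fac_right⟩
    · intro (h : IsIso f)
      refine ⟨fun A B g _ => inferInstance, ?_⟩
      rw [hW]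
      intro A B g _
      infer_instance
  refine ⟨llpOf W, allMaps, ⟨twoOutOfThree_countW Xi, ?_, ?_⟩, rfl, hiso⟩
  · change IsWFS (inter (llpOf W) W) allMaps
    rw [hiso]
    refine ⟨fun X Y f => ⟨X, 𝟙 X, f, inferInstanceAs (IsIso (𝟙 X)), trivial, by simp⟩, ?_, ?_⟩
    · ext X Y f
      refine ⟨fun _ A B g (hg : IsIso g) => inferInstance, fun _ => trivial⟩
    · ext X Y f
      constructor
      · intro (h : IsIso f) A B g _
        infer_instance
      · intro h
        have := h f trivial
        have sq : CommSq (𝟙 X) f f (𝟙 Y) := ⟨by simp⟩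
        exact ⟨sq.lift, sq.fac_left, sq.fac_right⟩
  · change IsWFS (llpOf W) (inter allMaps W)
    rw [hinter]
    refine ⟨fun X Y f => ?_, ?_, rfl⟩
    · have d := MorphismProperty.factorizationData G.rlp.llp G.rlp f
      refine ⟨d.Z, d.i, d.p, ?_, by rw [hW]; exact d.hp, d.fac⟩
      rw [hW]
      exact fun A B g hg => d.hi g hg
    · apply le_antisymm
      · intro X Y f hf A B g hg
        exact hg f hf
      · intro X Y f hf
        rw [hW]
        intro A B g hg
        refine hf g (fun A' B' g' hg' => ?_)
        rw [hW] at hg'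
        exact hg' g hg

end Paper
end

section
/- Let C be a model category in which every morphism is a fibration and every trivial cofibration (a cofibration that is a weak equivalence) is an isomorphism, and let γ : C → Ho(C) be the localization of C at its class of weak equivalences. Then for any two cofibrant objects A and B of C, the map Hom_C(A, B) → Hom_{Ho(C)}(γ(A), γ(B)) induced by γ is a bijection. In particular, for any objects Y, Z of C with cofibrant replacements C(Y) and C(Z), Hom_{Ho(C)}(γ(Y), γ(Z)) is in bijection with Hom_C(C(Y), C(Z)). -/
open CategoryTheory Limits

universe v u v' u'

namespace Paper

variable {C : Type u} [Category.{v} C]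

/-- Every weak equivalence has the right lifting property against cofibrations. -/
lemma lift_aux {Cof Fib W : MorphismProperty C} (hm : IsModelStructure Cof Fib W)
    (hfib : ∀ ⦃X Y : C⦄ (f : X ⟶ Y), Fib f) {A B X Y : C} (i : A ⟶ B) (w : X ⟶ Y)
    (hi : Cof i) (hw : W w) : HasLiftingProperty i w := by
  have h := hm.wfs_cof_trivFib.llp_eq
  rw [h] at hi
  exact hi w ⟨hfib w, hw⟩

lemma cof_of_lift {Cof Fib W : MorphismProperty C} (hm : IsModelStructure Cof Fib W)
    {A B : C} (i : A ⟶ B)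
    (hi : ∀ ⦃X Y : C⦄ (w : X ⟶ Y), W w → HasLiftingProperty i w) : Cof i := by
  rw [hm.wfs_cof_trivFib.llp_eq]
  exact fun X Y g hg => hi g hg.2

lemma id_mem {Cof Fib W : MorphismProperty C} (hm : IsModelStructure Cof Fib W)
    (X : C) : W (𝟙 X) := by
  have h : inter Fib W (𝟙 X) := by
    rw [hm.wfs_cof_trivFib.rlp_eq]
    intro A B h _
    infer_instance
  exact h.2

lemma inl_lift [HasInitial C] [HasBinaryCoproducts C] {A X Y : C} (w : X ⟶ Y)
    [HasLiftingProperty (initial.to A) w] :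
    HasLiftingProperty (coprod.inl : A ⟶ A ⨿ A) w := by
  refine ⟨fun {f g} sq => ?_⟩
  have sq' : CommSq (initial.to X) (initial.to A) w (coprod.inr ≫ g) :=
    ⟨Subsingleton.elim _ _⟩
  refine ⟨⟨⟨coprod.desc f sq'.lift, coprod.inl_desc _ _, ?_⟩⟩⟩
  apply coprod.hom_ext
  · rw [← Category.assoc, coprod.inl_desc, sq.w]
  · rw [← Category.assoc, coprod.inr_desc, sq'.fac_right]

/-- Maps out of a cofibrant object see weak equivalences as bijections. -/
lemma bij_of_cofibrant [HasInitial C] [HasBinaryCoproducts C]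
    {Cof Fib W : MorphismProperty C} (hm : IsModelStructure Cof Fib W)
    (hfib : ∀ ⦃X Y : C⦄ (f : X ⟶ Y), Fib f)
    (htcof : ∀ ⦃X Y : C⦄ (f : X ⟶ Y), Cof f → W f → IsIso f)
    {A : C} (hA : Cof (initial.to A)) {X Y : C} (w : X ⟶ Y) (hw : W w) :
    Function.Bijective (fun f : A ⟶ X => f ≫ w) := by
  constructor
  · intro f g hfg
    dsimp only at hfg
    obtain ⟨Z, i, p, hi, hp, hip⟩ := hm.wfs_cof_trivFib.factor (coprod.desc (𝟙 A) (𝟙 A))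
    have h0 : (coprod.inl ≫ i) ≫ p = 𝟙 A := by rw [Category.assoc, hip, coprod.inl_desc]
    have h1 : (coprod.inr ≫ i) ≫ p = 𝟙 A := by rw [Category.assoc, hip, coprod.inr_desc]
    have c0 : Cof (coprod.inl ≫ i) := by
      refine cof_of_lift hm _ fun X Y w hw => ?_
      have := lift_aux hm hfib _ w hA hw
      have := lift_aux hm hfib _ w hi hw
      have := inl_lift (A := A) w
      infer_instance
    have w0 : W (coprod.inl ≫ i) := (hm.twoOutOfThree _ p).2.2 (by rw [h0]; exact id_mem hm A) hp.2
    have := htcof _ c0 w0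
    have e : coprod.inr ≫ i = coprod.inl ≫ i := by
      have hpi : p ≫ coprod.inl ≫ i = 𝟙 Z := by
        rw [← cancel_epi (coprod.inl ≫ i), ← Category.assoc, h0,
          Category.id_comp, Category.comp_id]
      calc coprod.inr ≫ i = (coprod.inr ≫ i) ≫ (p ≫ coprod.inl ≫ i) := by rw [hpi, Category.comp_id]
        _ = ((coprod.inr ≫ i) ≫ p) ≫ coprod.inl ≫ i := by simp only [Category.assoc]
        _ = coprod.inl ≫ i := by rw [h1, Category.id_comp]
    have := lift_aux hm hfib _ w hi hw
    have sq : CommSq (coprod.desc f g) i w (p ≫ f ≫ w) := ⟨by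
      rw [← Category.assoc i, hip]
      apply coprod.hom_ext
      · rw [← Category.assoc, ← Category.assoc, coprod.inl_desc, coprod.inl_desc, Category.id_comp]
      · rw [← Category.assoc, ← Category.assoc, coprod.inr_desc, coprod.inr_desc, Category.id_comp,
          hfg]⟩
    have l := sq.fac_left
    have lf : (coprod.inl ≫ i) ≫ sq.lift = f := by rw [Category.assoc, l, coprod.inl_desc]
    have lg : (coprod.inr ≫ i) ≫ sq.lift = g := by rw [Category.assoc, l, coprod.inr_desc]
    exact lf.symm.trans ((congrArg (fun t => t ≫ sq.lift) e.symm).trans lg)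
  · intro g
    have := lift_aux hm hfib _ w hA hw
    have sq : CommSq (initial.to X) (initial.to A) w g := ⟨Subsingleton.elim _ _⟩
    exact ⟨sq.lift, sq.fac_right⟩

/-- Injectivity and surjectivity of `γ` on maps out of an object `A` such that
`Hom(A, -)` inverts `W`. -/
lemma bij_map {D : Type u'} [Category.{v'} D] (W : MorphismProperty C) (γ : C ⥤ D)
    [γ.IsLocalization W] (A : C)
    (hA : ∀ ⦃X Y : C⦄ (w : X ⟶ Y), W w → Function.Bijective (fun f : A ⟶ X => f ≫ w)) (B : C) :
    Function.Bijective (fun f : A ⟶ B => γ.map f) := by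
  let G : C ⥤ Type (max v v') := coyoneda.obj (Opposite.op A) ⋙ uliftFunctor.{v'}
  let K : D ⥤ Type (max v v') := coyoneda.obj (Opposite.op (γ.obj A)) ⋙ uliftFunctor.{v}
  have hG : W.IsInvertedBy G := by
    intro X Y w hw
    have : IsIso ((coyoneda.obj (Opposite.op A)).map w) := by
      rw [isIso_iff_bijective]
      exact hA w hw
    dsimp only [G, Functor.comp_map]
    infer_instance
  let F := Localization.lift G hG γ
  let e : γ ⋙ F ≅ G := Localization.Lifting.iso γ W G F
  let τ : G ⟶ γ ⋙ K :=
    { app := fun X => TypeCat.ofHom fun f => ULift.up (γ.map f.down)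
      naturality := by
        intro X Y f
        ext x
        apply ULift.ext
        exact γ.map_comp x.down f }
  let T : F ⟶ K := Localization.liftNatTrans γ W G (γ ⋙ K) F K τ
  have hT : ∀ X : C, e.inv.app X ≫ T.app (γ.obj X) = τ.app X := by
    intro X
    dsimp only [T]
    rw [Localization.liftNatTrans_app]
    exact (e.inv_hom_id_app_assoc X _).trans (Category.comp_id _)
  have nat : ∀ {X Y : C} (f : X ⟶ Y), e.inv.app X ≫ F.map (γ.map f) = G.map f ≫ e.inv.app Y :=
    fun f => (e.inv.naturality f).symm
  have key : ∀ f : A ⟶ B, (e.hom.app B (F.map (γ.map f) (e.inv.app A (ULift.up (𝟙 A))))).down = f := by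
    intro f
    have h1 : e.inv.app A ≫ F.map (γ.map f) ≫ e.hom.app B = G.map f := by
      rw [← Category.assoc, nat f, Category.assoc, e.inv_hom_id_app, Category.comp_id]
    have h2 := ConcreteCategory.congr_hom h1 (ULift.up (𝟙 A) : ULift.{v'} (A ⟶ A))
    exact (congrArg ULift.down h2).trans (Category.id_comp f)
  constructor
  · intro f g hfg
    rw [← key f, ← key g]
    dsimp only at hfg
    rw [hfg]
  · intro φ
    let x := e.inv.app A (ULift.up (𝟙 A))
    let y := e.hom.app B (F.map φ x)
    refine ⟨y.down, ?_⟩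
    have h1 : e.inv.app B y = F.map φ x :=
      ConcreteCategory.congr_hom (e.hom_inv_id_app B) (F.map φ x)
    have h2 : T.app (γ.obj B) (e.inv.app B y) = τ.app B y :=
      ConcreteCategory.congr_hom (hT B) y
    have h3 : T.app (γ.obj A) x = τ.app A (ULift.up (𝟙 A)) :=
      ConcreteCategory.congr_hom (hT A) _
    have h4 : T.app (γ.obj B) (F.map φ x) = K.map φ (T.app (γ.obj A) x) :=
      ConcreteCategory.congr_hom (T.naturality φ) x
    rw [h1, h4, h3] at h2
    have h5 : γ.map (𝟙 A) ≫ φ = γ.map y.down := congrArg ULift.down h2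
    rw [γ.map_id, Category.id_comp] at h5
    exact h5.symm

/-- in a model category in which every morphism is a fibration and
every trivial cofibration is an isomorphism, the localization functor
`γ : C ⥤ Ho(C)` at the weak equivalences induces a bijection
`Hom(A, B) ≃ Hom(γ A, γ B)` for all cofibrant `A`, `B`; in particular, for any `Y`, `Z`
with cofibrant replacements `C(Y)`, `C(Z)`, the set `Hom(γ Y, γ Z)` is in bijection
with `Hom(C(Y), C(Z))`. -/
theorem stmt_5 {C : Type u} [Category.{v} C] [HasLimits C] [HasColimits C]
    (Cof Fib W : MorphismProperty C)
    (hm : IsModelStructure Cof Fib W)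
    (hfib : ∀ ⦃X Y : C⦄ (f : X ⟶ Y), Fib f)
    (htcof : ∀ ⦃X Y : C⦄ (f : X ⟶ Y), Cof f → W f → IsIso f)
    {D : Type u'} [Category.{v'} D] (γ : C ⥤ D) [γ.IsLocalization W] :
    (∀ A B : C, Cof (initial.to A) → Cof (initial.to B) →
        Function.Bijective (fun f : A ⟶ B => γ.map f)) ∧
      ∀ (Y Z CY CZ : C) (pY : CY ⟶ Y) (pZ : CZ ⟶ Z),
        Cof (initial.to CY) → W pY → Cof (initial.to CZ) → W pZ →
          Nonempty ((γ.obj Y ⟶ γ.obj Z) ≃ (CY ⟶ CZ)) := by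
  have main : ∀ A B : C, Cof (initial.to A) → Function.Bijective (fun f : A ⟶ B => γ.map f) :=
    fun A B hA => bij_map W γ A (fun X Y w hw => bij_of_cofibrant hm hfib htcof hA w hw) B
  refine ⟨fun A B hA _ => main A B hA, ?_⟩
  intro Y Z CY CZ pY pZ hY hpY hZ hpZ
  have := Localization.inverts γ W pY hpY
  have := Localization.inverts γ W pZ hpZ
  exact ⟨((asIso (γ.map pY)).symm.homCongr (asIso (γ.map pZ)).symm).trans
    (Equiv.ofBijective _ (main CY CZ hY)).symm⟩

end Paper
end

section
/- Let UGph be the category of undirected graphs, and let W_U be the class of morphisms f : X → Y of UGph such that for every p ≥ 1: the composition with f of every backtrack-free p-cycle of X is a backtrack-free p-cycle of Y, and the resulting map from the set of backtrack-free p-cycles of X to the set of backtrack-free p-cycles of Y is a bijection. Then there does not exist any model structure on UGph whose class of weak equivalences is W_U. -/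
open CategoryTheory

namespace Paper

/-- An undirected graph: a set of nodes, a set of half-arcs, source and target maps
and an involution `i` on half-arcs with `s ∘ i = t`. -/
structure UGraph : Type 1 where
  nodes : Type
  half : Type
  s : half → nodes
  t : half → nodes
  inv : half → half
  inv_inv : ∀ a, inv (inv a) = a
  s_inv : ∀ a, s (inv a) = t a

/-- A morphism of undirected graphs: maps on nodes and half-arcs commuting with
source, target and the involution. -/
@[ext]
structure UGraph.Hom (X Y : UGraph) where
  f0 : X.nodes → Y.nodes
  f1 : X.half → Y.half
  comm_s : ∀ a, Y.s (f1 a) = f0 (X.s a)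
  comm_t : ∀ a, Y.t (f1 a) = f0 (X.t a)
  comm_inv : ∀ a, Y.inv (f1 a) = f1 (X.inv a)

/-- The category of undirected graphs. -/
instance : Category UGraph where
  Hom := UGraph.Hom
  id X := ⟨id, id, fun _ => rfl, fun _ => rfl, fun _ => rfl⟩
  comp f g := ⟨g.f0 ∘ f.f0, g.f1 ∘ f.f1,
    fun a => by simp [Function.comp, g.comm_s, f.comm_s],
    fun a => by simp [Function.comp, g.comm_t, f.comm_t],
    fun a => by simp [Function.comp, g.comm_inv, f.comm_inv]⟩

@[simp] theorem UGraph.comp_f0 {X Y Z : UGraph} (f : X ⟶ Y) (g : Y ⟶ Z) :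
    (f ≫ g).f0 = g.f0 ∘ f.f0 := rfl

@[simp] theorem UGraph.comp_f1 {X Y Z : UGraph} (f : X ⟶ Y) (g : Y ⟶ Z) :
    (f ≫ g).f1 = g.f1 ∘ f.f1 := rfl

/-- two nodes are adjacent if some half-arc goes from one to the other. -/
def UGraph.adj (X : UGraph) (x y : X.nodes) : Prop :=
  ∃ u : X.half, X.s u = x ∧ X.t u = y

/-- An undirected graph is connected if any two nodes are joined by a finite
sequence of consecutively incident half-arcs. -/
def UGraph.Connected (X : UGraph) : Prop :=
  ∀ x y : X.nodes, Relation.ReflTransGen X.adj x y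

/-- The undirected `p`-cycle `c^p_U` : nodes `ℤ/pℤ`, half-arcs `[n]⁺ = (n, true)`
and `[n]⁻ = (n, false)` with `s [n]⁺ = [n]`, `t [n]⁺ = [n+1]`, `i [n]⁺ = [n]⁻`. -/
def cycleU (p : ℕ) : UGraph where
  nodes := ZMod p
  half := ZMod p × Bool
  s a := if a.2 then a.1 else a.1 + 1
  t a := if a.2 then a.1 + 1 else a.1
  inv a := (a.1, !a.2)
  inv_inv a := by simp
  s_inv a := by rcases a with ⟨n, _ | _⟩ <;> simp

/-- A `p`-cycle `h : c^p_U ⟶ X` is backtrack-free if `h₁([n+1]⁺) ≠ h₁([n]⁻)` for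
all `n`. -/
def BFree {p : ℕ} {X : UGraph} (h : cycleU p ⟶ X) : Prop :=
  ∀ n : ZMod p, h.f1 (n + 1, true) ≠ h.f1 (n, false)

/-- A morphism of undirected graphs is a covering if it restricts to a bijection on
the half-arcs issued from each node. -/
def IsCovering {X Y : UGraph} (f : X ⟶ Y) : Prop :=
  ∀ x : X.nodes,
    Function.Bijective (fun u : {u : X.half // X.s u = x} =>
      (⟨f.f1 u.1, by rw [f.comm_s, u.2]⟩ : {v : Y.half // Y.s v = f.f0 x}))

end Paper

namespace Paper

universe v u

variable {C : Type u} [Category.{v} C]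

/-- The class `W_U` : morphisms `f : X ⟶ Y` such that for every `p ≥ 1`,
composition with `f` sends backtrack-free `p`-cycles of `X` to backtrack-free
`p`-cycles of `Y` and induces a bijection between them. -/
def WU : MorphismProperty UGraph :=
  fun X Y f => ∀ p : ℕ, 1 ≤ p →
    ∃ H : ∀ h : cycleU p ⟶ X, BFree h → BFree (h ≫ f),
      Function.Bijective (fun h : {h : cycleU p ⟶ X // BFree h} =>
        (⟨h.1 ≫ f, H h.1 h.2⟩ : {h' : cycleU p ⟶ Y // BFree h'}))

/-- The terminal graph: one node, one half-arc. -/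
def termG : UGraph where
  nodes := Unit
  half := Unit
  s _ := ()
  t _ := ()
  inv _ := ()
  inv_inv _ := rfl
  s_inv _ := rfl

/-- The edge. -/
def edgeG : UGraph where
  nodes := Bool
  half := Bool
  s b := b
  t b := !b
  inv b := !b
  inv_inv b := by simp
  s_inv _ := rfl

/-- The product of two graphs. -/
def prodG (X Z : UGraph) : UGraph where
  nodes := X.nodes × Z.nodes
  half := X.half × Z.half
  s a := (X.s a.1, Z.s a.2)
  t a := (X.t a.1, Z.t a.2)
  inv a := (X.inv a.1, Z.inv a.2)
  inv_inv a := by simp [X.inv_inv, Z.inv_inv]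
  s_inv a := by simp [X.s_inv, Z.s_inv]

def toTerm (X : UGraph) : X ⟶ termG :=
  UGraph.Hom.mk (fun _ => ()) (fun _ => ()) (fun _ => rfl) (fun _ => rfl) (fun _ => rfl)

theorem term_ext {X : UGraph} (f g : X ⟶ termG) : f = g := by
  apply UGraph.Hom.ext <;> (funext _; rfl)

def fstG (X Z : UGraph) : prodG X Z ⟶ X :=
  UGraph.Hom.mk Prod.fst Prod.fst (fun _ => rfl) (fun _ => rfl) (fun _ => rfl)

def sndG (X Z : UGraph) : prodG X Z ⟶ Z :=
  UGraph.Hom.mk Prod.snd Prod.snd (fun _ => rfl) (fun _ => rfl) (fun _ => rfl)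

def pairG {A X Z : UGraph} (f : A ⟶ X) (g : A ⟶ Z) : A ⟶ prodG X Z :=
  UGraph.Hom.mk (fun a => (f.f0 a, g.f0 a)) (fun a => (f.f1 a, g.f1 a))
    (fun a => Prod.ext (f.comm_s a) (g.comm_s a)) (fun a => Prod.ext (f.comm_t a) (g.comm_t a))
    (fun a => Prod.ext (f.comm_inv a) (g.comm_inv a))

theorem prod_ext {A X Z : UGraph} (f g : A ⟶ prodG X Z)
    (h1 : f ≫ fstG X Z = g ≫ fstG X Z) (h2 : f ≫ sndG X Z = g ≫ sndG X Z) : f = g := by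
  apply UGraph.Hom.ext
  · funext a
    exact Prod.ext (congrFun (congrArg UGraph.Hom.f0 h1) a) (congrFun (congrArg UGraph.Hom.f0 h2) a)
  · funext a
    exact Prod.ext (congrFun (congrArg UGraph.Hom.f1 h1) a) (congrFun (congrArg UGraph.Hom.f1 h2) a)

theorem edge_noBFree (p : ℕ) (h : cycleU p ⟶ edgeG) : ¬ BFree h := by
  intro hb
  apply hb 0
  have h1 := h.comm_s (0 + 1, true)
  have h2 := h.comm_s (0, false)
  exact h1.trans h2.symm

theorem term_noBFree (p : ℕ) (h : cycleU p ⟶ termG) : ¬ BFree h :=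
  fun hb => hb 0 rfl

theorem edge_term_WU : WU (toTerm edgeG) := by
  intro p _
  refine ⟨fun h hb => (edge_noBFree p h hb).elim, ?_, ?_⟩
  · rintro ⟨h, hb⟩
    exact (edge_noBFree p h hb).elim
  · rintro ⟨h, hb⟩
    exact (term_noBFree p h hb).elim

/-- The map from the 2-cycle to the edge. -/
def foldCycle : cycleU 2 ⟶ edgeG :=
  UGraph.Hom.mk (fun n : ZMod 2 => decide (n = 0))
    (fun a : ZMod 2 × Bool => xor (decide (a.1 = 0)) (!a.2))
    (by
      change ∀ a : ZMod 2 × Bool, (xor (decide (a.1 = 0)) (!a.2)) =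
        decide ((if a.2 then a.1 else a.1 + 1) = 0)
      decide)
    (by
      change ∀ a : ZMod 2 × Bool, (!(xor (decide (a.1 = 0)) (!a.2))) =
        decide ((if a.2 then a.1 + 1 else a.1) = 0)
      decide)
    (by
      change ∀ a : ZMod 2 × Bool, (!(xor (decide (a.1 = 0)) (!a.2))) =
        (xor (decide (a.1 = 0)) (!(!a.2)))
      decide)

/-- The other one. -/
def flipEdge : edgeG ⟶ edgeG :=
  UGraph.Hom.mk (fun b => !b) (fun b => !b) (fun _ => rfl) (fun _ => rfl) (fun _ => rfl)

def edgeLoop : edgeG ⟶ cycleU 1 :=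
  UGraph.Hom.mk (fun _ => (0 : ZMod 1)) (fun b => ((0 : ZMod 1), b))
    (fun _ => Subsingleton.elim (α := ZMod 1) _ _) (fun _ => Subsingleton.elim (α := ZMod 1) _ _)
    (fun _ => rfl)

/-- there is no model structure on the category of undirected graphs
whose class of weak equivalences is `W_U`. -/
theorem stmt_8 : ¬ ∃ Cof Fib : MorphismProperty UGraph,
    IsModelStructure Cof Fib WU := by
  rintro ⟨Cof, Fib, M⟩
  obtain ⟨Z, g, h, hg, ⟨hF, hW⟩, hgh⟩ := M.wfs_cof_trivFib.factor (toTerm edgeG)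
  have hgW : WU g := (M.twoOutOfThree g h).2.2 (hgh ▸ edge_term_WU) hW
  -- the projection `c² × Z ⟶ c²` is a trivial fibration
  have hproj : inter Fib WU (fstG (cycleU 2) Z) := by
    have hT : rlpOf Cof h := by
      rw [← M.wfs_cof_trivFib.rlp_eq]; exact ⟨hF, hW⟩
    rw [M.wfs_cof_trivFib.rlp_eq]
    intro A B k hk
    have := hT k hk
    constructor
    intro f b sq
    have sq' : CommSq (f ≫ sndG _ _) k h (toTerm B) := ⟨term_ext _ _⟩
    refine ⟨⟨⟨pairG b sq'.lift, ?_, ?_⟩⟩⟩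
    · apply prod_ext
      · exact sq.w.symm
      · exact sq'.fac_left
    · rfl
  obtain ⟨H, hinj, -⟩ := hproj.2 2 (by norm_num)
  have huniq : ∀ u v : cycleU 2 ⟶ Z, u = v := by
    intro u v
    have hb : ∀ w : cycleU 2 ⟶ Z, BFree (pairG (𝟙 (cycleU 2)) w) := by
      intro w n e
      have e2 : true = false := congrArg (fun x => x.1.2) e
      exact Bool.noConfusion e2
    have := @hinj ⟨_, hb u⟩ ⟨_, hb v⟩ (Subtype.ext rfl)
    exact congrArg (fun q => q.1 ≫ sndG _ _) this
  have hge : g.f1 true = g.f1 false := by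
    have := huniq (foldCycle ≫ g) (foldCycle ≫ flipEdge ≫ g)
    exact congrFun (congrArg UGraph.Hom.f1 this) ((0 : ZMod 2), true)
  -- fibrant replacement of the 1-cycle
  obtain ⟨Y, j, q, ⟨-, hjW⟩, hq, -⟩ := M.wfs_trivCof_fib.factor (toTerm (cycleU 1))
  have hQ : rlpOf (inter Cof WU) q := by
    rw [← M.wfs_trivCof_fib.rlp_eq]; exact hq
  have := hQ g ⟨hg, hgW⟩
  have sq : CommSq (edgeLoop ≫ j) g q (toTerm Z) := ⟨term_ext _ _⟩
  have hl := sq.fac_left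
  obtain ⟨H1, -⟩ := hjW 1 le_rfl
  have hb1 : BFree (𝟙 (cycleU 1)) := by
    intro n e
    have e2 : true = false := congrArg (fun x => x.2) e
    exact Bool.noConfusion e2
  apply H1 _ hb1 0
  have e1 : ∀ b : Bool, sq.lift.f1 (g.f1 b) = j.f1 ((0 : ZMod 1), b) :=
    fun b => congrFun (congrArg UGraph.Hom.f1 hl) b
  have e2 : j.f1 ((0 : ZMod 1), true) = j.f1 ((0 : ZMod 1), false) := by
    rw [← e1, ← e1, hge]
  exact e2

end Paper
end

section
/- Let X be an undirected graph and let C_X be the category whose objects are coverings f : Y → X and whose morphisms from f : Y → X to g : Z → X are the covering morphisms h : Y → Z such that g ∘ h = f. Then C_X has all small limits and all small colimits. -/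
open CategoryTheory

namespace Paper

open CategoryTheory Limits

theorem IsCovering.id (X : UGraph) : IsCovering (𝟙 X) := by
  intro x
  constructor
  · intro u v huv
    exact Subtype.ext (congrArg Subtype.val huv)
  · intro v
    exact ⟨⟨v.1, v.2⟩, Subtype.ext rfl⟩

theorem IsCovering.comp {X Y Z : UGraph} {f : X ⟶ Y} {g : Y ⟶ Z}
    (hf : IsCovering f) (hg : IsCovering g) : IsCovering (f ≫ g) := by
  intro x
  constructor
  · intro u v huv
    have h1 : g.f1 (f.f1 u.1) = g.f1 (f.f1 v.1) := congrArg Subtype.val huv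
    have h2 : (⟨f.f1 u.1, by rw [f.comm_s, u.2]⟩ : {w : Y.half // Y.s w = f.f0 x}) =
        ⟨f.f1 v.1, by rw [f.comm_s, v.2]⟩ := (hg (f.f0 x)).1 (Subtype.ext h1)
    exact (hf x).1 (Subtype.ext (congrArg Subtype.val h2))
  · intro w
    obtain ⟨v, hv⟩ := (hg (f.f0 x)).2 ⟨w.1, w.2⟩
    obtain ⟨u, hu⟩ := (hf x).2 v
    refine ⟨u, Subtype.ext ?_⟩
    show g.f1 (f.f1 u.1) = w.1
    have hu' : f.f1 u.1 = v.1 := congrArg Subtype.val hu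
    have hv' : g.f1 v.1 = w.1 := congrArg Subtype.val hv
    rw [hu', hv']

/-- An object of the category `C_X` : a covering of the undirected graph `X`. -/
structure Cov (X : UGraph) : Type 1 where
  total : UGraph
  proj : total ⟶ X
  cov : IsCovering proj

/-- The category `C_X` of coverings of `X` : morphisms from `f : Y ⟶ X` to
`g : Z ⟶ X` are the covering morphisms `h : Y ⟶ Z` with `g ∘ h = f`. -/
instance covCategory (X : UGraph) : Category (Cov X) where
  Hom A B := {h : A.total ⟶ B.total // IsCovering h ∧ h ≫ B.proj = A.proj}
  id A := ⟨𝟙 A.total, IsCovering.id _, Category.id_comp _⟩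
  comp f g := ⟨f.1 ≫ g.1, f.2.1.comp g.2.1, by rw [Category.assoc, g.2.2, f.2.2]⟩
  id_comp f := Subtype.ext (Category.id_comp f.1)
  comp_id f := Subtype.ext (Category.comp_id f.1)
  assoc f g h := Subtype.ext (Category.assoc f.1 g.1 h.1)

theorem isCovering_of {X Y : UGraph} {f : X ⟶ Y}
    (hi : ∀ u v, X.s u = X.s v → f.f1 u = f.f1 v → u = v)
    (hs : ∀ x v, Y.s v = f.f0 x → ∃ u, X.s u = x ∧ f.f1 u = v) : IsCovering f := by
  intro x
  constructor
  · intro u v huv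
    exact Subtype.ext (hi _ _ (u.2.trans v.2.symm) (congrArg Subtype.val huv))
  · intro v
    obtain ⟨u, h1, h2⟩ := hs x v.1 v.2
    exact ⟨⟨u, h1⟩, Subtype.ext h2⟩

theorem IsCovering.inj {X Y : UGraph} {f : X ⟶ Y} (hf : IsCovering f)
    {u v : X.half} (h : X.s u = X.s v) (h' : f.f1 u = f.f1 v) : u = v := by
  have := (hf (X.s v)).1 (a₁ := ⟨u, h⟩) (a₂ := ⟨v, rfl⟩) (Subtype.ext h')
  exact congrArg Subtype.val this

theorem IsCovering.surj {X Y : UGraph} {f : X ⟶ Y} (hf : IsCovering f)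
    (x : X.nodes) (v : Y.half) (h : Y.s v = f.f0 x) : ∃ u, X.s u = x ∧ f.f1 u = v := by
  obtain ⟨u, hu⟩ := (hf x).2 ⟨v, h⟩
  exact ⟨u.1, u.2, congrArg Subtype.val hu⟩

theorem isCovering_cancel {X Y Z : UGraph} {f : X ⟶ Y} {g : Y ⟶ Z}
    (hfg : IsCovering (f ≫ g)) (hg : IsCovering g) : IsCovering f := by
  apply isCovering_of
  · intro u v h h'
    exact hfg.inj h (congrArg g.f1 h')
  · intro x v h
    obtain ⟨u, h1, h2⟩ := hfg.surj x (g.f1 v) (by rw [g.comm_s, h]; rfl)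
    refine ⟨u, h1, hg.inj ?_ h2⟩
    rw [f.comm_s, h1, h]

/-- Any graph morphism over `X` between coverings is a morphism of coverings. -/
def Cov.mk' {X : UGraph} {A B : Cov X} (h : A.total ⟶ B.total) (w : h ≫ B.proj = A.proj) :
    A ⟶ B :=
  ⟨h, isCovering_cancel (g := B.proj) (by rw [w]; exact A.cov) B.cov, w⟩

theorem Cov.w0 {X : UGraph} {A B : Cov X} (h : A ⟶ B) (x : A.total.nodes) :
    B.proj.f0 (h.1.f0 x) = A.proj.f0 x := by
  conv_rhs => rw [← h.2.2]
  rfl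

theorem Cov.w1 {X : UGraph} {A B : Cov X} (h : A ⟶ B) (x : A.total.half) :
    B.proj.f1 (h.1.f1 x) = A.proj.f1 x := by
  conv_rhs => rw [← h.2.2]
  rfl

theorem Cov.hom_ext' {X : UGraph} {A B : Cov X} {f g : A ⟶ B}
    (h0 : ∀ x, f.1.f0 x = g.1.f0 x) (h1 : ∀ x, f.1.f1 x = g.1.f1 x) : f = g :=
  Subtype.ext (UGraph.Hom.ext (funext h0) (funext h1))

section Lim

variable {X : UGraph} {J : Type} [SmallCategory J] (F : J ⥤ Cov X)

/-- The limit graph. -/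
def limGraph : UGraph where
  nodes := {p : X.nodes × (∀ j, (F.obj j).total.nodes) //
    (∀ j, (F.obj j).proj.f0 (p.2 j) = p.1) ∧
    ∀ i j (f : i ⟶ j), (F.map f).1.f0 (p.2 i) = p.2 j}
  half := {p : X.half × (∀ j, (F.obj j).total.half) //
    (∀ j, (F.obj j).proj.f1 (p.2 j) = p.1) ∧
    ∀ i j (f : i ⟶ j), (F.map f).1.f1 (p.2 i) = p.2 j}
  s p := ⟨(X.s p.1.1, fun j => (F.obj j).total.s (p.1.2 j)),
    fun j => by simp only [← p.2.1 j, UGraph.Hom.comm_s],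
    fun i j f => by simp only [← p.2.2 i j f, UGraph.Hom.comm_s]⟩
  t p := ⟨(X.t p.1.1, fun j => (F.obj j).total.t (p.1.2 j)),
    fun j => by simp only [← p.2.1 j, UGraph.Hom.comm_t],
    fun i j f => by simp only [← p.2.2 i j f, UGraph.Hom.comm_t]⟩
  inv p := ⟨(X.inv p.1.1, fun j => (F.obj j).total.inv (p.1.2 j)),
    fun j => by simp only [← p.2.1 j, UGraph.Hom.comm_inv],
    fun i j f => by simp only [← p.2.2 i j f, UGraph.Hom.comm_inv]⟩
  inv_inv p := Subtype.ext (Prod.ext (X.inv_inv _) (funext fun j => (F.obj j).total.inv_inv _))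
  s_inv p := Subtype.ext (Prod.ext (X.s_inv _) (funext fun j => (F.obj j).total.s_inv _))

/-- Its projection to the base. -/
def limProj : limGraph F ⟶ X where
  f0 p := p.1.1
  f1 p := p.1.1
  comm_s _ := rfl
  comm_t _ := rfl
  comm_inv _ := rfl

theorem limProj_cov : IsCovering (limProj F) := by
  apply isCovering_of
  · intro u v h h'
    have h' : u.1.1 = v.1.1 := h'
    refine Subtype.ext (Prod.ext h' (funext fun j => ?_))
    apply (F.obj j).cov.inj
    · exact congrFun (congrArg (fun q => q.1.2) h) j
    · rw [u.2.1, v.2.1, h']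
  · intro x v h
    have h : X.s v = x.1.1 := h
    choose u hu hup using fun j => (F.obj j).cov.surj (x.1.2 j) v (by rw [x.2.1, h])
    refine ⟨⟨(v, u), hup, fun i j f => ?_⟩, Subtype.ext (Prod.ext h (funext hu)), rfl⟩
    apply (F.obj j).cov.inj
    · simp only [UGraph.Hom.comm_s, hu, x.2.2]
    · simp only [Cov.w1, hup]

/-- The limit covering. -/
def limCov : Cov X := ⟨limGraph F, limProj F, limProj_cov F⟩

/-- The limit cone. -/
def limCone : Cone F where
  pt := limCov F
  π :=
    { app := fun j => Cov.mk' (A := limCov F)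
        { f0 := fun p => p.1.2 j
          f1 := fun p => p.1.2 j
          comm_s := fun _ => rfl
          comm_t := fun _ => rfl
          comm_inv := fun _ => rfl }
        (UGraph.Hom.ext (funext fun p => p.2.1 j) (funext fun p => p.2.1 j))
      naturality := fun i j f => Cov.hom_ext' (fun p => (p.2.2 i j f).symm)
        (fun p => (p.2.2 i j f).symm) }

/-- The limit cone is limiting. -/
def limIsLimit : IsLimit (limCone F) where
  lift c := Cov.mk' (B := limCov F)
    { f0 := fun x => ⟨(c.pt.proj.f0 x, fun j => (c.π.app j).1.f0 x),
        fun j => Cov.w0 _ _, fun i j f => congrArg (fun k => k.1.f0 x) (c.w f)⟩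
      f1 := fun x => ⟨(c.pt.proj.f1 x, fun j => (c.π.app j).1.f1 x),
        fun j => Cov.w1 _ _, fun i j f => congrArg (fun k => k.1.f1 x) (c.w f)⟩
      comm_s := fun a => Subtype.ext (Prod.ext (UGraph.Hom.comm_s _ _)
        (funext fun j => UGraph.Hom.comm_s _ _))
      comm_t := fun a => Subtype.ext (Prod.ext (UGraph.Hom.comm_t _ _)
        (funext fun j => UGraph.Hom.comm_t _ _))
      comm_inv := fun a => Subtype.ext (Prod.ext (UGraph.Hom.comm_inv _ _)
        (funext fun j => UGraph.Hom.comm_inv _ _)) }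
    rfl
  fac c j := rfl
  uniq c m h := by
    apply Cov.hom_ext'
    · intro x
      refine Subtype.ext (Prod.ext (Cov.w0 m x) (funext fun j => ?_))
      exact congrArg (fun k => k.1.f0 x) (h j)
    · intro x
      refine Subtype.ext (Prod.ext (Cov.w1 m x) (funext fun j => ?_))
      exact congrArg (fun k => k.1.f1 x) (h j)

/-- Generating relation on nodes. -/
def rel0 (a b : Σ j, (F.obj j).total.nodes) : Prop :=
  ∃ f : a.1 ⟶ b.1, (F.map f).1.f0 a.2 = b.2

/-- Generating relation on half-arcs. -/
def rel1 (a b : Σ j, (F.obj j).total.half) : Prop :=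
  ∃ f : a.1 ⟶ b.1, (F.map f).1.f1 a.2 = b.2

/-- The colimit graph. -/
def colimGraph : UGraph where
  nodes := Quot (rel0 F)
  half := Quot (rel1 F)
  s := Quot.map (fun a => ⟨a.1, (F.obj a.1).total.s a.2⟩)
    (fun a b ⟨f, h⟩ => ⟨f, by simp only [← h, UGraph.Hom.comm_s]⟩)
  t := Quot.map (fun a => ⟨a.1, (F.obj a.1).total.t a.2⟩)
    (fun a b ⟨f, h⟩ => ⟨f, by simp only [← h, UGraph.Hom.comm_t]⟩)
  inv := Quot.map (fun a => ⟨a.1, (F.obj a.1).total.inv a.2⟩)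
    (fun a b ⟨f, h⟩ => ⟨f, by simp only [← h, UGraph.Hom.comm_inv]⟩)
  inv_inv := by
    rintro ⟨j, a⟩
    exact congrArg (fun b => Quot.mk _ (⟨j, b⟩ : Σ j, (F.obj j).total.half))
      ((F.obj j).total.inv_inv a)
  s_inv := by
    rintro ⟨j, a⟩
    exact congrArg (fun b => Quot.mk _ (⟨j, b⟩ : Σ j, (F.obj j).total.nodes))
      ((F.obj j).total.s_inv a)

/-- Maps out of the colimit graph. -/
def colimDesc (Z : UGraph) (k : ∀ j, (F.obj j).total ⟶ Z)
    (hk : ∀ i j (f : i ⟶ j), (F.map f).1 ≫ k j = k i) : colimGraph F ⟶ Z where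
  f0 := Quot.lift (fun a => (k a.1).f0 a.2) (fun a b ⟨f, h⟩ => by
    rw [← h, ← hk _ _ f]; rfl)
  f1 := Quot.lift (fun a => (k a.1).f1 a.2) (fun a b ⟨f, h⟩ => by
    rw [← h, ← hk _ _ f]; rfl)
  comm_s := by rintro ⟨j, a⟩; exact (k j).comm_s a
  comm_t := by rintro ⟨j, a⟩; exact (k j).comm_t a
  comm_inv := by rintro ⟨j, a⟩; exact (k j).comm_inv a

/-- Projection of the colimit. -/
def colimProj : colimGraph F ⟶ X :=
  colimDesc F X (fun j => (F.obj j).proj) (fun _ _ f => (F.map f).2.2)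

theorem proj0_eq {a b : Σ j, (F.obj j).total.nodes} (h : Relation.EqvGen (rel0 F) a b) :
    (F.obj a.1).proj.f0 a.2 = (F.obj b.1).proj.f0 b.2 :=
  congrArg (colimProj F).f0 (Quot.eqvGen_sound h)

theorem rel_lift {a b : Σ j, (F.obj j).total.nodes} (h : Relation.EqvGen (rel0 F) a b) :
    ∀ (u : (F.obj a.1).total.half) (v : (F.obj b.1).total.half),
      (F.obj a.1).total.s u = a.2 → (F.obj b.1).total.s v = b.2 →
      (F.obj a.1).proj.f1 u = (F.obj b.1).proj.f1 v →
      Quot.mk (rel1 F) ⟨a.1, u⟩ = Quot.mk (rel1 F) ⟨b.1, v⟩ := by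
  induction h with
  | rel a b hab =>
    obtain ⟨f, hf⟩ := hab
    intro u v hu hv huv
    apply Quot.sound
    refine ⟨f, (F.obj b.1).cov.inj ?_ ?_⟩
    · simp only [UGraph.Hom.comm_s, hu, hf, hv]
    · simp only [Cov.w1, huv]
  | refl a =>
    intro u v hu hv huv
    rw [(F.obj a.1).cov.inj (hu.trans hv.symm) huv]
  | symm a b _ ih =>
    intro u v hu hv huv
    exact (ih v u hv hu huv.symm).symm
  | trans a b c hab hbc ih1 ih2 =>
    intro u v hu hv huv
    obtain ⟨w, hw, hw'⟩ := (F.obj b.1).cov.surj b.2 ((F.obj a.1).proj.f1 u)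
      (by rw [UGraph.Hom.comm_s, hu, proj0_eq F hab])
    exact (ih1 u w hu hw hw'.symm).trans (ih2 w v hw hv (hw'.trans huv))

theorem colimProj_cov : IsCovering (colimProj F) := by
  apply isCovering_of
  · rintro ⟨i, u⟩ ⟨j, v⟩ h h'
    exact rel_lift F (Quot.eqvGen_exact h) u v rfl rfl h'
  · rintro ⟨j, x⟩ v h
    obtain ⟨u, hu, hup⟩ := (F.obj j).cov.surj x v h
    exact ⟨Quot.mk _ ⟨j, u⟩, congrArg (fun b => Quot.mk _ (⟨j, b⟩ : Σ j, (F.obj j).total.nodes)) hu,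
      hup⟩

/-- The colimit covering. -/
def colimCov : Cov X := ⟨colimGraph F, colimProj F, colimProj_cov F⟩

/-- The colimit cocone. -/
def colimCocone : Cocone F where
  pt := colimCov F
  ι :=
    { app := fun j => Cov.mk' (B := colimCov F)
        { f0 := fun x => Quot.mk _ ⟨j, x⟩
          f1 := fun x => Quot.mk _ ⟨j, x⟩
          comm_s := fun _ => rfl
          comm_t := fun _ => rfl
          comm_inv := fun _ => rfl }
        rfl
      naturality := fun i j f => Cov.hom_ext'
        (fun p => (Quot.sound (r := rel0 F) (a := ⟨i, p⟩) (b := ⟨j, _⟩) ⟨f, rfl⟩).symm)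
        (fun p => (Quot.sound (r := rel1 F) (a := ⟨i, p⟩) (b := ⟨j, _⟩) ⟨f, rfl⟩).symm) }

/-- The colimit cocone is colimiting. -/
def colimIsColimit : IsColimit (colimCocone F) where
  desc c := Cov.mk' (A := colimCov F)
    (colimDesc F c.pt.total (fun j => (c.ι.app j).1)
      (fun _ _ f => congrArg Subtype.val (c.w f)))
    (UGraph.Hom.ext (funext (by rintro ⟨j, x⟩; exact Cov.w0 (c.ι.app j) x))
      (funext (by rintro ⟨j, x⟩; exact Cov.w1 (c.ι.app j) x)))
  fac c j := rfl
  uniq c m h := by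
    apply Cov.hom_ext'
    · rintro ⟨j, x⟩
      exact congrArg (fun k => k.1.f0 x) (h j)
    · rintro ⟨j, x⟩
      exact congrArg (fun k => k.1.f1 x) (h j)

end Lim

/-- the category `C_X` of coverings of an undirected graph `X` has
all small limits and all small colimits. -/
theorem stmt_10 (X : UGraph) : HasLimits (Cov X) ∧ HasColimits (Cov X) := by
  refine ⟨⟨fun J _ => ⟨fun F => ⟨⟨⟨limCone F, limIsLimit F⟩⟩⟩⟩⟩,
    ⟨fun J _ => ⟨fun F => ⟨⟨⟨colimCocone F, colimIsColimit F⟩⟩⟩⟩⟩⟩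

end Paper
end
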